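/- Let k ≥ 2 and let S_2≀S_k ≤ S_{2k} be the subgroup of permutations mapping each pair {2i−1,2i} (1 ≤ i ≤ k) to some pair {2j−1,2j}; each g ∈ S_2≀S_k induces a permutation ḡ of the set of k pairs. Let Δ_k = {g ∈ S_2≀S_k : sgn(g) = sgn(ḡ)}. Then the permutation character of S_{2k} on the cosets of Δ_k is multiplicity-free if and only if there is NO strictly decreasing sequence of positive integers b_1 > b_2 > … > b_s ≥ 1 (with s ≥ 1) such that k = 4(b_1 + … + b_s) − s. -/

import Mathlib

/-- The permutation character of `G` on the cosets of `H` is multiplicity-free: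
every irreducible complex representation of `G` has at most a one-dimensional
subspace of `H`-fixed vectors. -/
noncomputable def IsMultFree {G : Type} [Group G] (H : Subgroup G) : Prop :=
  ∀ V : FDRep ℂ G, CategoryTheory.Simple V →
    Module.finrank ℂ (Representation.invariants (V.ρ.comp H.subtype)) ≤ 1

/-- `σ` is the permutation of the `k` pairs `{2i−1, 2i}` of `{1,…,2k}` induced by the
permutation `g` (so `g` maps each pair onto a pair, pair `j` going to pair `σ j`). -/
def InducedPairPerm {k : ℕ} (g : Equiv.Perm (Fin (2 * k))) (σ : Equiv.Perm (Fin k)) : Prop :=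
  ∀ i : Fin (2 * k), ((g i : ℕ) / 2) = (σ ⟨(i : ℕ) / 2, by have := i.isLt; omega⟩ : ℕ)

/-!
The permutation character of `G` on the cosets of `K` is multiplicity-free if and only if the Hecke
algebra `e ℂ[G] e`, with `e` the average of `K`, is commutative. Let `K` be the kernel of
`χ g = sgn g * sgn ḡ` on the hyperoctahedral group `W`. If for every `g` some `x, y ∈ W` satisfy
`χ x = -1` and `x * g = g * y`, then `g⁻¹ ∈ W g W` improves to `g⁻¹ ∈ K g K`, and Gelfand's trick
gives commutativity. Conversely, any `c ∈ W` with `χ c = -1` normalizes `K`, so commutativity yields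
`K c g K = K g c K` and hence such `x` and `y`.

The double cosets of `W` are represented by permutations `σ` of the blocks, acting on one point of
each block, so the condition is that `χ` is nontrivial on the stabilizer of every coset of such a
representative. This stabilizer is generated by the centralizer of `σ`, where `χ` is the sign, and
one element for each cycle of `σ`, acting on the cycle as a reflection and exchanging the points of
its blocks. The sign is trivial on the centralizer if and only if the cycle lengths are odd and
distinct, and `χ = (-1) ^ ((m - 1) / 2 + m)` on the reflection of a cycle of odd length `m`, which
is `1` if and only if `m ≡ 3` modulo `4`. So `χ` is trivial on some stabilizer if and only if `k`
is a sum of distinct numbers of the form `4 * b - 1`.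
-/

section SimpleModules

variable {k A : Type*} [Field k] [Ring A] [Algebra k A]

/-- **Burnside's theorem** on matrix algebras. -/
theorem lsmul_surjective_of_isSimpleModule [IsAlgClosed k] (M : Type*) [AddCommGroup M]
    [Module k M] [Module A M] [IsScalarTower k A M] [IsSimpleModule A M] [FiniteDimensional k M] :
    Function.Surjective (Algebra.lsmul k k M : A →ₐ[k] Module.End k M) := by
  intro X
  have scalar := (IsSimpleModule.algebraMap_end_bijective_of_isAlgClosed k (A := A) (V := M)).2
  let Y : Module.End (Module.End A M) M :=
    { X with
      map_smul' := fun φ m => by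
        obtain ⟨t, rfl⟩ := scalar φ
        exact X.map_smul t m }
  have : Module.Finite (Module.End A M) M := .of_restrictScalars_finite k _ _
  obtain ⟨a, ha⟩ := Module.Finite.toModuleEnd_moduleEnd_surjective (R := A) Y
  exact ⟨a, LinearMap.ext fun m => congr($ha m)⟩

theorem finrank_range_lsmul_le_one [IsAlgClosed k] {M : Type*} [AddCommGroup M]
    [Module k M] [Module A M] [IsScalarTower k A M] [IsSimpleModule A M] [FiniteDimensional k M]
    {e : A} (he : IsIdempotentElem e) (hcomm : ∀ a b, Commute (e * a * e) (e * b * e)) :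
    Module.finrank k (LinearMap.range (Algebra.lsmul k k M e)) ≤ 1 := by
  have fix : ∀ u ∈ LinearMap.range (Algebra.lsmul k k M e), e • u = u := by
    rintro _ ⟨w, rfl⟩
    simp only [Algebra.lsmul_coe, smul_smul, he.eq]
  by_contra! hrank
  have : Nontrivial (LinearMap.range (Algebra.lsmul k k M e)) :=
    Module.nontrivial_of_finrank_pos (zero_lt_one.trans hrank)
  obtain ⟨⟨u, hu⟩, hu0⟩ := exists_ne (0 : LinearMap.range (Algebra.lsmul k k M e))
  obtain ⟨v, hv, hvu⟩ : ∃ v ∈ LinearMap.range (Algebra.lsmul k k M e),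
      v ∉ Submodule.span k {u} := by
    by_contra! h
    refine hrank.not_ge (finrank_le_one ⟨u, hu⟩ fun ⟨v, hv⟩ => ?_)
    obtain ⟨t, ht⟩ := Submodule.mem_span_singleton.1 (h v hv)
    exact ⟨t, Subtype.ext ht⟩
  obtain ⟨f, hfv, hfu⟩ := Submodule.exists_le_ker_of_notMem hvu
  replace hfu : f u = 0 := hfu (Submodule.mem_span_singleton_self u)
  obtain ⟨g, hgu⟩ : ∃ g : Module.Dual k M, g u ≠ 0 := by
    by_contra! h
    exact hu0 (Subtype.ext ((Module.forall_dual_apply_eq_zero_iff k u).1 h))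
  obtain ⟨a, ha⟩ := lsmul_surjective_of_isSimpleModule (A := A) M (f.smulRight u)
  obtain ⟨b, hb⟩ := lsmul_surjective_of_isSimpleModule (A := A) M (g.smulRight v)
  have ha (m : M) : a • m = f m • u := congr($ha m)
  have hb (m : M) : b • m = g m • v := congr($hb m)
  have key := congr($((hcomm a b).eq) • u)
  simp only [mul_smul, fix u hu, fix v hv, ha, hb, hfu, zero_smul, smul_zero,
    smul_comm e (_ : k)] at key
  simp_all

theorem eq_zero_of_forall_isSimpleModule {R : Type*} [Ring R] [IsSemisimpleRing R] {z : R}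
    (hz : ∀ (I : Ideal R) [IsSimpleModule R (R ⧸ I)] (m : R ⧸ I), z • m = 0) : z = 0 := by
  have hJ : z ∈ Ring.jacobson R := by
    rw [Ring.jacobson_eq_sInf_isMaximal]
    refine Submodule.mem_sInf.2 fun I hI => ?_
    have : IsSimpleModule R (R ⧸ I) := isSimpleModule_iff_isCoatom.2 (Ideal.isMaximal_def.1 hI)
    have := hz I (Submodule.Quotient.mk 1)
    rwa [← Submodule.Quotient.mk_smul, smul_eq_mul, mul_one, Submodule.Quotient.mk_eq_zero] at this
  rwa [Ring.jacobson, IsSemisimpleModule.jacobson_eq_bot R R] at hJ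

theorem commute_of_finrank_range_lsmul_le_one [FiniteDimensional k A] [IsSemisimpleRing A] {e : A}
    (hrank : ∀ (I : Ideal A) [IsSimpleModule A (A ⧸ I)],
      Module.finrank k (LinearMap.range (Algebra.lsmul k k (A ⧸ I) e)) ≤ 1) (a b : A) :
    Commute (e * a * e) (e * b * e) := by
  refine sub_eq_zero.1 (eq_zero_of_forall_isSimpleModule fun I _ m => ?_)
  have : FiniteDimensional k (A ⧸ I) := .of_surjective (I.mkQ.restrictScalars k) I.mkQ_surjective
  obtain ⟨⟨v, _⟩, hv⟩ := finrank_le_one_iff.1 (hrank I)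
  have scalar (n : A ⧸ I) : ∃ t : k, e • n = t • v := by
    obtain ⟨t, ht⟩ := hv ⟨e • n, n, rfl⟩
    exact ⟨t, congr(Subtype.val $ht).symm⟩
  obtain ⟨t, ht⟩ := scalar m
  obtain ⟨ε, hε⟩ := scalar v
  obtain ⟨α, hα⟩ := scalar (a • v)
  obtain ⟨β, hβ⟩ := scalar (b • v)
  simp only [sub_smul, mul_smul, ht, hε, hα, hβ, smul_comm e (_ : k),
    smul_comm a (_ : k), smul_comm b (_ : k)]
  module

end SimpleModules

universe u

section Representations

open CategoryTheory MonoidAlgebra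
open scoped MonoidAlgebra

theorem isIrreducible_of_simple {k : Type*} [Field k] {G : Type*} [Group G] (V : FDRep k G)
    [Simple V] : Representation.IsIrreducible V.ρ := by
  have : Nontrivial (Subrepresentation V.ρ) := by
    refine ⟨⊥, ⊤, fun h => id_nonzero V ?_⟩
    ext v
    exact (congr(v ∈ Subrepresentation.toSubmodule $h).to_iff).2 trivial
  refine ⟨fun S => or_iff_not_imp_left.2 fun hS => ?_⟩
  let incl : FDRep.of S.toRepresentation ⟶ V :=
    ⟨InducedCategory.homMk (ModuleCat.ofHom S.toSubmodule.subtype), fun g => by ext1; rfl⟩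
  have : Mono incl := ⟨fun {Z} a b hab => by
    ext x
    exact congrArg (fun t : Z ⟶ V => t.hom.hom.hom x) hab⟩
  have incl_ne_zero : incl ≠ 0 := fun h => hS <| eq_bot_iff.2 fun v hv =>
    congrArg (fun t : FDRep.of S.toRepresentation ⟶ V => t.hom.hom.hom ⟨v, hv⟩) h
  have : IsIso incl := isIso_of_mono_of_nonzero incl_ne_zero
  refine eq_top_iff.2 fun v _ => ?_
  have hv : (inv incl ≫ incl).hom.hom.hom v = v := by rw [IsIso.inv_hom_id]; rfl
  rw [← hv]
  exact ((inv incl).hom.hom.hom v : S.toSubmodule).2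

theorem simple_of_isIrreducible {k G V : Type u} [Field k] [IsAlgClosed k]
    [Group G] [Finite G] [NeZero (Nat.card G : k)] [AddCommGroup V] [Module k V]
    [FiniteDimensional k V] (ρ : Representation k G V) [ρ.IsIrreducible] :
    Simple (FDRep.of ρ) := by
  rw [FDRep.simple_iff_end_is_rank_one,
    ← (Representation.linHom.invariantsEquivFDRepHom (FDRep.of ρ) (FDRep.of ρ)).finrank_eq,
    ← Representation.IsIrreducible.finrank_intertwiningMap_self ρ]
  exact (Representation.invariantsEquivIntertwiningMap ρ ρ).finrank_eq

variable {k : Type*} [Field k] {G : Type*} [Group G]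

/-- The representation of `G` on a module over its group algebra. -/
noncomputable def moduleRep (k G M : Type*) [Field k] [Group G] [AddCommGroup M] [Module k M]
    [Module k[G] M] [IsScalarTower k k[G] M] : Representation k G M :=
  (Algebra.lsmul k k M : k[G] →ₐ[k] Module.End k M).toMonoidHom.comp (of k G)

variable (M : Type*) [AddCommGroup M] [Module k M] [Module k[G] M] [IsScalarTower k k[G] M]

theorem asAlgebraHom_moduleRep : (moduleRep k G M).asAlgebraHom = Algebra.lsmul k k M := by
  ext g
  simp [moduleRep]

theorem isIrreducible_moduleRep [IsSimpleModule k[G] M] : (moduleRep k G M).IsIrreducible := by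
  let e : (moduleRep k G M).asModule ≃ₗ[k[G]] M :=
    { (moduleRep k G M).asModuleEquiv with
      map_smul' := fun r m => congr($(asAlgebraHom_moduleRep M) r m) }
  rw [Representation.irreducible_iff_isSimpleModule_asModule]
  exact IsSimpleModule.congr e

end Representations

section GroupAlgebra

open scoped MonoidAlgebra

variable {k : Type*} [Field k] {G : Type*} [Group G]

theorem mapDomainAlgHom_subtype_single {K : Subgroup G} {g : G} (hg : g ∈ K) :
    MonoidAlgebra.mapDomainAlgHom k k K.subtype (.single ⟨g, hg⟩ 1) = MonoidAlgebra.of k G g := by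
  simp

variable (K : Subgroup G) [Fintype K] [Invertible (Fintype.card K : k)]

variable (k) in
/-- The average of the elements of the subgroup `K` in the group algebra of `G`. -/
noncomputable def subgroupAverage : k[G] :=
  MonoidAlgebra.mapDomainAlgHom k k K.subtype (GroupAlgebra.average k K)

theorem subgroupAverage_eq :
    subgroupAverage k K = ⅟(Fintype.card K : k) • ∑ δ : K, MonoidAlgebra.of k G δ := by
  simp [subgroupAverage, GroupAlgebra.average]

variable {K}

theorem of_mul_subgroupAverage {g : G} (hg : g ∈ K) :
    MonoidAlgebra.of k G g * subgroupAverage k K = subgroupAverage k K := by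
  rw [subgroupAverage, ← mapDomainAlgHom_subtype_single hg, ← map_mul,
    GroupAlgebra.mul_average_left]

theorem subgroupAverage_mul_of {g : G} (hg : g ∈ K) :
    subgroupAverage k K * MonoidAlgebra.of k G g = subgroupAverage k K := by
  rw [subgroupAverage, ← mapDomainAlgHom_subtype_single hg, ← map_mul,
    GroupAlgebra.mul_average_right]

variable (K)

theorem range_asAlgebraHom_subgroupAverage {V : Type*} [AddCommGroup V] [Module k V]
    (ρ : Representation k G V) :
    LinearMap.range (ρ.asAlgebraHom (subgroupAverage k K)) =
      Representation.invariants (ρ.comp K.subtype) := by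
  have h : ρ.asAlgebraHom.comp (MonoidAlgebra.mapDomainAlgHom k k K.subtype) =
      Representation.asAlgebraHom (ρ.comp K.subtype) := by
    ext g
    simp
  rw [subgroupAverage, ← AlgHom.comp_apply, h]
  exact (Representation.isProj_averageMap (ρ.comp K.subtype)).range

theorem isIdempotentElem_subgroupAverage : IsIdempotentElem (subgroupAverage k K) := by
  rw [IsIdempotentElem]
  nth_rw 1 [subgroupAverage_eq]
  simp only [smul_mul_assoc, Finset.sum_mul, of_mul_subgroupAverage (SetLike.coe_mem _),
    Finset.sum_const, Finset.card_univ, ← Nat.cast_smul_eq_nsmul k, smul_smul, invOf_mul_self,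
    one_smul]

end GroupAlgebra

section MultiplicityFree

open scoped MonoidAlgebra

variable {G : Type} [Group G] [Finite G] (K : Subgroup G) [Fintype K]
  [Invertible (Fintype.card K : ℂ)]

theorem isMultFree_iff_commute : IsMultFree K ↔ ∀ a b : ℂ[G],
    Commute (subgroupAverage ℂ K * a * subgroupAverage ℂ K)
      (subgroupAverage ℂ K * b * subgroupAverage ℂ K) := by
  constructor
  · intro hK a b
    have : NeZero (Nat.card G : ℂ) := ⟨Nat.cast_ne_zero.2 Nat.card_pos.ne'⟩
    refine commute_of_finrank_range_lsmul_le_one (k := ℂ) (fun I _ => ?_) a b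
    have : FiniteDimensional ℂ (ℂ[G] ⧸ I) :=
      .of_surjective (I.mkQ.restrictScalars ℂ) I.mkQ_surjective
    have := isIrreducible_moduleRep (k := ℂ) (G := G) (ℂ[G] ⧸ I)
    have h : Module.finrank ℂ (Representation.invariants
        ((moduleRep ℂ G (ℂ[G] ⧸ I)).comp K.subtype)) ≤ 1 :=
      hK _ (simple_of_isIrreducible (moduleRep ℂ G (ℂ[G] ⧸ I)))
    rwa [← range_asAlgebraHom_subgroupAverage, asAlgebraHom_moduleRep] at h
  · intro hcomm V _
    have := (Representation.irreducible_iff_isSimpleModule_asModule _).1 (isIrreducible_of_simple V)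
    rw [← range_asAlgebraHom_subgroupAverage]
    exact finrank_range_lsmul_le_one (k := ℂ) (M := Representation.asModule V.ρ)
      (isIdempotentElem_subgroupAverage K) hcomm

end MultiplicityFree

section Hecke

open DoubleCoset HopfAlgebra MonoidAlgebra
open scoped MonoidAlgebra

variable {k : Type*} [Field k] {G : Type*} [Group G] (K : Subgroup G) [Fintype K]
  [Invertible (Fintype.card K : k)]

theorem subgroupAverage_mul_of_mul_eq_iff (x y : G) :
    subgroupAverage k K * of k G x * subgroupAverage k K =
      subgroupAverage k K * of k G y * subgroupAverage k K ↔ mk K K x = mk K K y := by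
  constructor
  · intro h
    let π : k[G] →ₗ[k] (DoubleCoset.Quotient (K : Set G) K →₀ k) :=
      (MonoidAlgebra.basis G k).constr k fun g => .single (mk K K g) 1
    have π_of (g : G) : π (of k G g) = .single (mk K K g) 1 := by
      simpa using (MonoidAlgebra.basis G k).constr_basis k
        (fun g => (.single (mk K K g) 1 : DoubleCoset.Quotient (K : Set G) K →₀ k)) g
    have π_average (g : G) :
        π (subgroupAverage k K * of k G g * subgroupAverage k K) = .single (mk K K g) 1 := by
      have mk_eq (δ δ' : K) : mk K K (δ * g * δ' : G) = mk K K g :=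
        ((DoubleCoset.eq K K g _).2 ⟨δ, δ.2, δ', δ'.2, rfl⟩).symm
      simp only [subgroupAverage_eq, smul_mul_assoc, mul_smul_comm, Finset.sum_mul, Finset.mul_sum,
        ← map_mul, map_smul, map_sum, π_of, mk_eq, Finset.sum_const, Finset.card_univ,
        ← Nat.cast_smul_eq_nsmul k, smul_smul, invOf_mul_self, one_smul]
    exact Finsupp.single_left_injective (one_ne_zero (α := k))
      ((π_average x).symm.trans (h ▸ π_average y))
  · intro h
    obtain ⟨δ, hδ, δ', hδ', rfl⟩ := (DoubleCoset.eq K K x y).1 h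
    simp only [map_mul, ← mul_assoc, subgroupAverage_mul_of hδ]
    rw [mul_assoc _ (of k G δ'), of_mul_subgroupAverage hδ']

theorem antipode_subgroupAverage :
    antipode k (subgroupAverage k K) = subgroupAverage k K := by
  rw [subgroupAverage_eq, map_smul, map_sum]
  congr 1
  exact Fintype.sum_equiv (Equiv.inv K) _ _ fun δ => by simp

/-- **Gelfand's trick**: the antipode is an anti-automorphism fixing the Hecke algebra. -/
theorem commute_of_mk_inv_eq (h : ∀ g : G, mk K K g⁻¹ = mk K K g) (a b : k[G]) :
    Commute (subgroupAverage k K * a * subgroupAverage k K)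
      (subgroupAverage k K * b * subgroupAverage k K) := by
  set e := subgroupAverage k K with he
  have antipode_fix (c : k[G]) : antipode k (e * c * e) = e * c * e := by
    rw [antipode_mul_antidistrib, antipode_mul_antidistrib, antipode_subgroupAverage, ← mul_assoc]
    induction c using MonoidAlgebra.induction_on with
    | of g =>
      rw [of_apply, antipode_single, antipode_one, ← of_apply, ← of_apply, he,
        subgroupAverage_mul_of_mul_eq_iff, h]
    | add c d hc hd => simp only [map_add, mul_add, add_mul, hc, hd]
    | smul r c hc => simp only [map_smul, mul_smul_comm, smul_mul_assoc, hc]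
  have hprod : e * a * e * (e * b * e) = e * (a * e * e * b) * e := by simp only [mul_assoc]
  calc e * a * e * (e * b * e) = antipode k (e * a * e * (e * b * e)) := by
        rw [hprod, antipode_fix]
    _ = e * b * e * (e * a * e) := by rw [antipode_mul_antidistrib, antipode_fix, antipode_fix]

theorem mk_mul_comm_of_commute {c : G} (hc : c ∈ Subgroup.normalizer K)
    (hcomm : ∀ a b : k[G], Commute (subgroupAverage k K * a * subgroupAverage k K)
      (subgroupAverage k K * b * subgroupAverage k K)) (g : G) :
    mk K K (c * g) = mk K K (g * c) := by
  rw [← subgroupAverage_mul_of_mul_eq_iff (k := k)]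
  have he := (isIdempotentElem_subgroupAverage (k := k) K).eq
  set e := subgroupAverage k K with he_def
  have hce : of k G c * e = e * of k G c := by
    simp only [he_def, subgroupAverage_eq, smul_mul_assoc, mul_smul_comm, Finset.sum_mul,
      Finset.mul_sum, ← map_mul]
    congr 1
    exact Fintype.sum_equiv (K.normalizerMonoidHom ⟨c, hc⟩).toEquiv _ _ fun δ => by simp
  have hece : e * of k G c * e = e * of k G c := by rw [mul_assoc, hce, ← mul_assoc, he]
  calc e * of k G (c * g) * e = e * of k G c * e * (e * of k G g * e) := by
        simp only [map_mul, ← mul_assoc, hece]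
    _ = e * of k G g * e * (e * of k G c * e) := hcomm _ _
    _ = e * of k G (g * c) * e := by
        rw [hece, map_mul, ← mul_assoc, mul_assoc (e * _) e e, he, mul_assoc, ← hce, ← mul_assoc,
          ← mul_assoc]

end Hecke

section KernelOfCharacter

open DoubleCoset

variable {G : Type} [Group G] {W : Type*} [Group W] (ι : W →* G) (χ : W →* ℤˣ)

theorem exists_intertwiner_of_inv_eq {g : G} {a b x y : W} (hinv : g⁻¹ = ι a * g * ι b)
    (hx : χ x = -1) (hxy : ι x * g = g * ι y) :
    ∃ x' y' : W, χ x' = -1 ∧ χ y' = -1 ∧ ι x' * g = g * ι y' := by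
  obtain hy | hy := Int.units_eq_one_or (χ y)
  · have hswap : ι (a⁻¹ * y * a) * g = g * ι (b * x * b⁻¹) := by
      have hyx : ι y * g⁻¹ = g⁻¹ * ι x := by
        rw [eq_inv_mul_iff_mul_eq, ← mul_assoc, ← hxy, mul_inv_cancel_right]
      calc ι (a⁻¹ * y * a) * g = (ι a)⁻¹ * (ι y * g⁻¹) * (ι b)⁻¹ := by
            rw [hinv]; simp [mul_assoc]
        _ = g * ι (b * x * b⁻¹) := by rw [hyx, hinv]; simp [mul_assoc]
    refine ⟨x * (a⁻¹ * y * a), y * (b * x * b⁻¹), by simp [hx, hy], by simp [hx, hy], ?_⟩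
    rw [map_mul, mul_assoc, hswap, ← mul_assoc, hxy, mul_assoc, ← map_mul]
  · exact ⟨x, y, hx, hy, hxy⟩

variable [Finite G]

theorem isMultFree_of_mk_inv_eq {K : Subgroup G} (h : ∀ g : G, mk K K g⁻¹ = mk K K g) :
    IsMultFree K := by
  have := Fintype.ofFinite K
  have := invertibleOfNonzero (Nat.cast_ne_zero (R := ℂ).2 (Fintype.card_ne_zero (α := K)))
  exact (isMultFree_iff_commute K).2 (commute_of_mk_inv_eq K h)

theorem IsMultFree.mk_mul_comm {K : Subgroup G} (hK : IsMultFree K) {c : G}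
    (hc : c ∈ Subgroup.normalizer K) (g : G) : mk K K (c * g) = mk K K (g * c) := by
  have := Fintype.ofFinite K
  have := invertibleOfNonzero (Nat.cast_ne_zero (R := ℂ).2 (Fintype.card_ne_zero (α := K)))
  exact mk_mul_comm_of_commute K hc ((isMultFree_iff_commute K).1 hK) g

theorem isMultFree_map_ker_iff (hχ : ∃ c, χ c = -1)
    (hinv : ∀ g : G, ∃ a b : W, χ a = χ b ∧ g⁻¹ = ι a * g * ι b) :
    IsMultFree (χ.ker.map ι) ↔ ∀ g : G, ∃ x y : W, χ x = -1 ∧ ι x * g = g * ι y := by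
  constructor
  · intro hK g
    obtain ⟨c, hc⟩ := hχ
    have c_mem : ι c ∈ Subgroup.normalizer (χ.ker.map ι) :=
      Subgroup.le_normalizer_map ι ⟨c, by simp [Subgroup.normalizer_eq_top], rfl⟩
    obtain ⟨_, ⟨δ, hδ, rfl⟩, _, ⟨δ', -, rfl⟩, h⟩ :=
      (DoubleCoset.eq _ _ _ _).1 (hK.mk_mul_comm c_mem g)
    refine ⟨δ * c, c * δ'⁻¹, by simp_all, ?_⟩
    rw [map_mul, map_mul, map_inv, ← mul_assoc, h]
    group
  · refine fun h => isMultFree_of_mk_inv_eq fun g => ((DoubleCoset.eq _ _ _ _).2 ?_).symm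
    obtain ⟨a, b, hab, hg⟩ := hinv g
    obtain ha | ha := Int.units_eq_one_or (χ a)
    · exact ⟨ι a, ⟨a, ha, rfl⟩, ι b, ⟨b, hab.symm.trans ha, rfl⟩, hg⟩
    · obtain ⟨x, y, hx, hxy⟩ := h g
      obtain ⟨x, y, hx, hy, hxy⟩ := exists_intertwiner_of_inv_eq ι χ hg hx hxy
      refine ⟨ι (a * x), ⟨a * x, by simp_all, rfl⟩, ι (y⁻¹ * b), ⟨y⁻¹ * b, by simp_all, rfl⟩, ?_⟩
      rw [hg, map_mul, mul_assoc (ι a) (ι x), hxy]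
      simp [mul_assoc]

end KernelOfCharacter

section HyperoctahedralGroup

open Equiv Equiv.Perm

variable (I : Type*)

/-- The fixed-point-free involution of `I × Bool` whose orbits are the blocks `{i} × Bool`. -/
def blockFlip : Perm (I × Bool) := prodCongrRight fun _ => Equiv.boolNot

/-- The wreath product of the symmetric group on two letters with the symmetric group of `I`, as the
group of permutations of `I × Bool` which permute the blocks `{i} × Bool`; equivalently, which
commute with `blockFlip`. -/
def hyperoctahedralGroup : Subgroup (Perm (I × Bool)) := Subgroup.centralizer {blockFlip I}

variable {I}

theorem blockFlip_apply (x : I × Bool) : blockFlip I x = (x.1, !x.2) := rfl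

theorem blockFlip_mul_self : blockFlip I * blockFlip I = 1 := by
  ext1 x
  simp [blockFlip_apply]

theorem mem_hyperoctahedralGroup_iff {g : Perm (I × Bool)} :
    g ∈ hyperoctahedralGroup I ↔ ∀ i, g (i, true) = ((g (i, false)).1, !(g (i, false)).2) := by
  rw [hyperoctahedralGroup, Subgroup.mem_centralizer_singleton_iff]
  constructor
  · exact fun h i => congr($h (i, false))
  · intro h
    ext1 ⟨i, b⟩
    cases b <;> simp [blockFlip_apply, h]

theorem fst_apply_eq (g : hyperoctahedralGroup I) (x : I × Bool) :
    (g.1 x).1 = (g.1 (x.1, false)).1 := by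
  obtain ⟨i, _ | _⟩ := x
  · rfl
  · rw [mem_hyperoctahedralGroup_iff.1 g.2]

/-- The permutation of the blocks `{i} × Bool` induced by an element of the hyperoctahedral
group. -/
def blockPerm : hyperoctahedralGroup I →* Perm I :=
  MonoidHom.toHomPerm
    { toFun g i := (g.1 (i, false)).1
      map_one' := rfl
      map_mul' g h := funext fun i => fst_apply_eq g (h.1 (i, false)) }

theorem fst_apply_eq_blockPerm (g : hyperoctahedralGroup I) (x : I × Bool) :
    (g.1 x).1 = blockPerm g x.1 :=
  fst_apply_eq g x

theorem exists_blockPerm_eq_iff {g : Perm (I × Bool)} {σ : Perm I} :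
    (∃ h : hyperoctahedralGroup I, h.1 = g ∧ blockPerm h = σ) ↔ ∀ x, (g x).1 = σ x.1 := by
  constructor
  · rintro ⟨h, rfl, rfl⟩
    exact fst_apply_eq_blockPerm h
  · intro h
    have fst_eq (i : I) : (g (i, true)).1 = (g (i, false)).1 := by rw [h, h]
    have snd_ne (i : I) : (g (i, true)).2 ≠ (g (i, false)).2 := fun hi =>
      absurd (g.injective (Prod.ext (fst_eq i) hi)) (by simp)
    have hg : g ∈ hyperoctahedralGroup I := mem_hyperoctahedralGroup_iff.2 fun i =>
      Prod.ext (fst_eq i) (Bool.eq_not_of_ne (snd_ne i))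
    exact ⟨⟨g, hg⟩, rfl, Equiv.ext fun i => h (i, false)⟩

/-- The element of the hyperoctahedral group which permutes the blocks by `σ`, after exchanging the
two points of the blocks `i` with `f i = true`. -/
def signedPerm (σ : Perm I) (f : I → Bool) : hyperoctahedralGroup I :=
  ⟨(prodCongrLeft fun _ => σ) * prodCongrRight fun i => if f i then Equiv.boolNot else 1,
    mem_hyperoctahedralGroup_iff.2 fun i => by cases h : f i <;> simp [h]⟩

theorem signedPerm_apply (σ : Perm I) (f : I → Bool) (x : I × Bool) :
    (signedPerm σ f).1 x = (σ x.1, xor (f x.1) x.2) := by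
  obtain ⟨i, b⟩ := x
  cases h : f i <;> simp [signedPerm, h]

theorem blockPerm_signedPerm (σ : Perm I) (f : I → Bool) : blockPerm (signedPerm σ f) = σ := by
  ext i
  rw [← fst_apply_eq_blockPerm _ (i, false), signedPerm_apply]

theorem exists_eq_signedPerm (g : hyperoctahedralGroup I) : ∃ σ f, g = signedPerm σ f := by
  refine ⟨blockPerm g, fun i => (g.1 (i, false)).2, Subtype.ext (Equiv.ext fun ⟨i, b⟩ => ?_)⟩
  rw [signedPerm_apply, ← fst_apply_eq_blockPerm g (i, false)]
  cases b
  · simp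
  · simp [mem_hyperoctahedralGroup_iff.1 g.2]

theorem signedPerm_mul (σ τ : Perm I) (f f' : I → Bool) :
    signedPerm σ f * signedPerm τ f' = signedPerm (σ * τ) fun i => xor (f (τ i)) (f' i) := by
  ext1
  ext1 x
  simp [signedPerm_apply]

variable [Fintype I] [DecidableEq I]

variable (I) in
/-- The character `g ↦ sgn g * sgn ḡ` of the hyperoctahedral group, where `ḡ` is the permutation of
the blocks induced by `g`. -/
def blockSign : hyperoctahedralGroup I →* ℤˣ :=
  (sign.comp (hyperoctahedralGroup I).subtype) * sign.comp blockPerm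

theorem blockSign_signedPerm (σ : Perm I) (f : I → Bool) :
    blockSign I (signedPerm σ f) = sign σ * ∏ i, if f i then -1 else 1 := by
  have sign_flips (i : I) :
      sign (if f i then Equiv.boolNot else 1 : Perm Bool) = if f i then -1 else 1 := by
    cases f i
    · rfl
    · decide
  have h : blockSign I (signedPerm σ f) = sign (signedPerm σ f).1 * sign σ :=
    congr(_ * sign $(blockPerm_signedPerm σ f))
  rw [h, signedPerm, Perm.sign_mul, sign_prodCongrLeft, sign_prodCongrRight, mul_comm]
  simp [sign_flips]

theorem mem_map_ker_blockSign_iff {g : Perm (I × Bool)} :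
    g ∈ (blockSign I).ker.map (hyperoctahedralGroup I).subtype ↔
      ∃ σ : Perm I, (∀ x, (g x).1 = σ x.1) ∧ sign g = sign σ := by
  have blockSign_eq_one_iff (h : hyperoctahedralGroup I) :
      blockSign I h = 1 ↔ sign h.1 = sign (blockPerm h) := by
    have hdiv : blockSign I h = sign h.1 / sign (blockPerm h) := (Int.units_div_eq_mul _ _).symm
    rw [hdiv, div_eq_one]
  simp only [← exists_blockPerm_eq_iff]
  constructor
  · rintro ⟨h, hh, rfl⟩
    exact ⟨_, ⟨h, rfl, rfl⟩, (blockSign_eq_one_iff h).1 hh⟩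
  · rintro ⟨_, ⟨h, rfl, rfl⟩, hsign⟩
    exact ⟨h, (blockSign_eq_one_iff h).2 hsign, rfl⟩

end HyperoctahedralGroup

section TwoColoring

open Equiv Equiv.Perm

variable {α : Type*} {a b : Perm α}

theorem semiconjBy_mul_of_involutive (ha : a * a = 1) (hb : b * b = 1) :
    SemiconjBy a (a * b) (a * b)⁻¹ := by
  rw [SemiconjBy, mul_inv_rev, inv_eq_of_mul_eq_one_left ha, inv_eq_of_mul_eq_one_left hb,
    ← mul_assoc, ha, mul_assoc, ha, one_mul, mul_one]

-- A word of odd length in `a` and `b` is conjugate to `a` or to `b`.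
theorem not_sameCycle_mul_of_involutive (ha : a * a = 1) (hb : b * b = 1) (ha' : ∀ x, a x ≠ x)
    (hb' : ∀ x, b x ≠ x) (x : α) : ¬ (a * b).SameCycle x (a x) := by
  rintro ⟨n, hn⟩
  have hconj (m : ℤ) : a * (a * b) ^ m = (a * b) ^ (-m) * a := by
    rw [zpow_neg, ← inv_zpow]
    exact (semiconjBy_mul_of_involutive ha hb).zpow_right m
  have hfix : (a * (a * b) ^ n) x = x := by
    rw [Perm.mul_apply, hn, ← Perm.mul_apply, ha, Perm.one_apply]
  obtain ⟨m, rfl | rfl⟩ := Int.even_or_odd' n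
  · refine ha' (((a * b) ^ m) x) (Perm.inv_eq_iff_eq.1 ?_)
    rw [two_mul, zpow_add, ← mul_assoc, hconj, zpow_neg] at hfix
    exact hfix
  · refine hb' (((a * b) ^ m) x) (Perm.inv_eq_iff_eq.1 ?_)
    rw [two_mul, add_assoc, zpow_add, add_comm m, zpow_add, ← mul_assoc, hconj, zpow_neg, zpow_one,
      mul_assoc, ← mul_assoc a, ← mul_assoc a, ha, one_mul] at hfix
    exact hfix

theorem exists_two_coloring_of_involutive (ha : a * a = 1) (hb : b * b = 1) (ha' : ∀ x, a x ≠ x)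
    (hb' : ∀ x, b x ≠ x) : ∃ c : α → Bool, ∀ x, c (a x) = !c x ∧ c (b x) = !c x := by
  let q : α → Quotient (SameCycle.setoid (a * b)) := Quotient.mk _
  let _ := IsWellOrder.linearOrder (WellOrderingRel (α := Quotient (SameCycle.setoid (a * b))))
  have a_a (x : α) : a (a x) = x := congr($ha x)
  have b_b (x : α) : b (b x) = x := congr($hb x)
  have q_mul (x : α) : q (a (b x)) = q x := Quotient.sound (sameCycle_apply_left.2 (.refl _ _))
  have q_b (x : α) : q (b x) = q (a x) := by rw [← q_mul (b x), b_b]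
  have q_ne (x : α) : q x ≠ q (a x) := fun h =>
    not_sameCycle_mul_of_involutive ha hb ha' hb' x (Quotient.exact h)
  have lt_swap (x : α) : decide (q (a x) < q x) = !decide (q x < q (a x)) := by
    simp [← decide_not, (q_ne x).symm.le_iff_lt]
  refine ⟨fun x => decide (q x < q (a x)), fun x => ⟨?_, ?_⟩⟩
  · simp only [a_a, lt_swap]
  · simp only [q_mul, q_b, lt_swap]

end TwoColoring

section DoubleCosets

open Equiv Equiv.Perm

variable {I : Type*}

/-- The permutation of `I × Bool` acting as `σ` on `I × {true}` and fixing `I × {false}`; these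
represent the double cosets of the hyperoctahedral group. -/
def halfPerm (σ : Perm I) : Perm (I × Bool) := prodCongrLeft fun b => if b then σ else 1

theorem halfPerm_apply_false (σ : Perm I) (i : I) : halfPerm σ (i, false) = (i, false) := rfl

theorem halfPerm_apply_true (σ : Perm I) (i : I) : halfPerm σ (i, true) = (σ i, true) := rfl

theorem halfPerm_inv_apply_true (σ : Perm I) (i : I) :
    (halfPerm σ)⁻¹ (i, true) = (σ⁻¹ i, true) := rfl

theorem halfPerm_inv_apply_false (σ : Perm I) (i : I) :
    (halfPerm σ)⁻¹ (i, false) = (i, false) := rfl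

theorem exists_mul_halfPerm_of_snd_apply_eq [Finite I] {g : Perm (I × Bool)}
    (hg : ∀ x, (g x).2 = x.2) :
    ∃ (h : hyperoctahedralGroup I) (σ : Perm I), g = h * halfPerm σ := by
  have restrict (b : Bool) : ∃ α : Perm I, ∀ i, g (i, b) = (α i, b) := by
    have hinj : Function.Injective fun i => (g (i, b)).1 := fun i j hij =>
      congrArg Prod.fst (g.injective (Prod.ext hij ((hg (i, b)).trans (hg (j, b)).symm)))
    exact ⟨.ofBijective _ (Finite.injective_iff_bijective.1 hinj), fun i => Prod.ext rfl (hg _)⟩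
  obtain ⟨α, hα⟩ := restrict false
  obtain ⟨β, hβ⟩ := restrict true
  refine ⟨signedPerm α fun _ => false, α⁻¹ * β, Equiv.ext fun ⟨i, b⟩ => ?_⟩
  cases b
  · simp [hα, signedPerm_apply, halfPerm_apply_false]
  · simp [hβ, signedPerm_apply, halfPerm_apply_true]

theorem exists_snd_apply_eq_of_blockFlip {c : I × Bool → Bool}
    (hc : ∀ x, c (blockFlip I x) = !c x) :
    ∃ h : hyperoctahedralGroup I, ∀ x, (h.1 x).2 = c x := by
  refine ⟨signedPerm 1 fun i => c (i, false), fun ⟨i, b⟩ => ?_⟩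
  have hi : c (i, true) = !c (i, false) := hc (i, false)
  cases b <;> simp [signedPerm_apply, hi]

theorem exists_mul_halfPerm_mul [Finite I] (g : Perm (I × Bool)) :
    ∃ (h₁ h₂ : hyperoctahedralGroup I) (σ : Perm I), g = h₁ * halfPerm σ * h₂ := by
  have flip_ne (x : I × Bool) : blockFlip I x ≠ x := fun h => by
    simpa [blockFlip_apply] using congrArg Prod.snd h
  obtain ⟨c, hc⟩ := exists_two_coloring_of_involutive (b := g * blockFlip I * g⁻¹)
    blockFlip_mul_self (by rw [conj_mul, blockFlip_mul_self, mul_one, mul_inv_cancel]) flip_ne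
    fun x h => flip_ne (g⁻¹ x) (Perm.eq_inv_iff_eq.2 h)
  obtain ⟨h₁, hh₁⟩ := exists_snd_apply_eq_of_blockFlip fun x => (hc x).1
  obtain ⟨h₂, hh₂⟩ := exists_snd_apply_eq_of_blockFlip (c := fun x => c (g x)) fun x => by
    simpa using (hc (g x)).2
  obtain ⟨h, σ, hσ⟩ := exists_mul_halfPerm_of_snd_apply_eq (g := h₁.1 * g * h₂.1⁻¹) fun x => by
    simp [hh₁, ← hh₂]
  refine ⟨h₁⁻¹ * h, h₂, σ, ?_⟩
  rw [Subgroup.coe_mul, mul_assoc _ h.1, ← hσ, InvMemClass.coe_inv]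
  group

theorem exists_halfPerm_inv_eq [Finite I] (σ : Perm I) :
    ∃ q : hyperoctahedralGroup I, (halfPerm σ)⁻¹ = q.1 * halfPerm σ * q.1⁻¹ := by
  have := Fintype.ofFinite I
  classical
  obtain ⟨ρ, hρ⟩ := isConj_iff.1 (isConj_iff_cycleType_eq.2 (cycleType_inv σ).symm)
  have hσρ (i : I) : ρ (σ i) = σ⁻¹ (ρ i) := congr($(mul_inv_eq_iff_eq_mul.1 hρ) i)
  refine ⟨signedPerm ρ fun _ => false, ?_⟩
  rw [eq_mul_inv_iff_mul_eq, inv_mul_eq_iff_eq_mul]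
  ext1 ⟨i, b⟩
  cases b <;> simp [signedPerm_apply, halfPerm_apply_false, halfPerm_apply_true, hσρ]

theorem exists_inv_eq_mul_mul [Fintype I] [DecidableEq I] (g : Perm (I × Bool)) :
    ∃ a b : hyperoctahedralGroup I, blockSign I a = blockSign I b ∧ g⁻¹ = a * g * b := by
  obtain ⟨h₁, h₂, σ, rfl⟩ := exists_mul_halfPerm_mul g
  obtain ⟨q, hq⟩ := exists_halfPerm_inv_eq σ
  refine ⟨h₂⁻¹ * q * h₁⁻¹, h₂⁻¹ * q⁻¹ * h₁⁻¹, by simp, ?_⟩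
  rw [mul_inv_rev, mul_inv_rev, hq]
  simp [mul_assoc]

end DoubleCosets

section Stabilizers

open Equiv Equiv.Perm

variable {I : Type*}

/-- The stabilizer, in the hyperoctahedral group acting on its left cosets, of the coset of
`halfPerm σ`. -/
def cosetStabilizer (σ : Perm I) : Subgroup (hyperoctahedralGroup I) :=
  ((hyperoctahedralGroup I).comap (MulAut.conj (halfPerm σ)⁻¹).toMonoidHom).subgroupOf
    (hyperoctahedralGroup I)

theorem mem_cosetStabilizer_iff_exists {σ : Perm I} {x : hyperoctahedralGroup I} :
    x ∈ cosetStabilizer σ ↔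
      ∃ y : hyperoctahedralGroup I, x.1 * halfPerm σ = halfPerm σ * y.1 := by
  have h : x ∈ cosetStabilizer σ ↔
      (halfPerm σ)⁻¹ * x.1 * halfPerm σ ∈ hyperoctahedralGroup I := .rfl
  rw [h]
  constructor
  · exact fun hx => ⟨⟨_, hx⟩, by group⟩
  · rintro ⟨y, hy⟩
    rw [mul_assoc, hy, inv_mul_cancel_left]
    exact y.2

theorem signedPerm_mem_cosetStabilizer_iff {σ τ : Perm I} {f : I → Bool} :
    signedPerm τ f ∈ cosetStabilizer σ ↔
      ∀ i, f (σ i) = f i ∧ τ (σ i) = (if f i then σ⁻¹ else σ) (τ i) := by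
  have h : signedPerm τ f ∈ cosetStabilizer σ ↔
      (halfPerm σ)⁻¹ * (signedPerm τ f).1 * halfPerm σ ∈ hyperoctahedralGroup I := .rfl
  rw [h, mem_hyperoctahedralGroup_iff]
  refine forall_congr' fun i => ?_
  rw [Perm.mul_apply, Perm.mul_apply, Perm.mul_apply, Perm.mul_apply, halfPerm_apply_false,
    halfPerm_apply_true, signedPerm_apply, signedPerm_apply]
  cases f i <;> cases f (σ i) <;>
    simp [halfPerm_inv_apply_false, halfPerm_inv_apply_true, Equiv.symm_apply_eq]

theorem not_le_ker_iff {G : Type*} [Group G] {χ : G →* ℤˣ} {S : Subgroup G} :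
    ¬ S ≤ χ.ker ↔ ∃ x ∈ S, χ x = -1 := by
  simp only [SetLike.not_le_iff_exists, MonoidHom.mem_ker, ← Int.units_ne_iff_eq_neg]

variable [Fintype I] [DecidableEq I]

theorem forall_exists_mul_eq_mul_iff :
    (∀ g : Perm (I × Bool), ∃ x y : hyperoctahedralGroup I,
      blockSign I x = -1 ∧ x.1 * g = g * y.1) ↔
    ∀ σ : Perm I, ∃ x ∈ cosetStabilizer σ, blockSign I x = -1 := by
  constructor
  · intro h σ
    obtain ⟨x, y, hx, hxy⟩ := h (halfPerm σ)
    exact ⟨x, mem_cosetStabilizer_iff_exists.2 ⟨y, hxy⟩, hx⟩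
  · intro h g
    obtain ⟨h₁, h₂, σ, rfl⟩ := exists_mul_halfPerm_mul g
    obtain ⟨x, hx, hχ⟩ := h σ
    obtain ⟨y, hxy⟩ := mem_cosetStabilizer_iff_exists.1 hx
    refine ⟨h₁ * x * h₁⁻¹, h₂⁻¹ * y * h₂, by simp [hχ], ?_⟩
    calc h₁.1 * x.1 * h₁.1⁻¹ * (h₁.1 * halfPerm σ * h₂.1)
        = h₁.1 * (x.1 * halfPerm σ) * h₂.1 := by group
      _ = h₁.1 * halfPerm σ * h₂.1 * (h₂.1⁻¹ * y.1 * h₂.1) := by rw [hxy]; group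

theorem isMultFree_map_ker_blockSign_iff [Nonempty I] {G : Type} [Group G]
    (φ : Perm (I × Bool) ≃* G) :
    IsMultFree ((blockSign I).ker.map (φ.toMonoidHom.comp (hyperoctahedralGroup I).subtype)) ↔
      ¬ ∃ σ : Perm I, cosetStabilizer σ ≤ (blockSign I).ker := by
  have : Finite G := .of_equiv _ φ.toEquiv
  obtain ⟨i⟩ := ‹Nonempty I›
  rw [isMultFree_map_ker_iff _ _ ⟨signedPerm 1 fun j => decide (j = i), ?_⟩ ?_,
    φ.surjective.forall, not_exists]
  · simp only [not_le_ker_iff, ← forall_exists_mul_eq_mul_iff]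
    simp [← map_mul]
  · simp [blockSign_signedPerm]
  · refine φ.surjective.forall.2 fun g => ?_
    obtain ⟨a, b, hab, hg⟩ := exists_inv_eq_mul_mul g
    exact ⟨a, b, hab, by simp [← map_inv, ← map_mul, hg]⟩

end Stabilizers

section Reflections

open Equiv Equiv.Perm

theorem sign_inv_of_odd_card {G : Type*} [Group G] [Fintype G] [DecidableEq G]
    (hG : Odd (Fintype.card G)) : sign (Equiv.inv G) = (-1) ^ (Fintype.card G / 2) := by
  have fixed_eq : Function.fixedPoints (Equiv.inv G) = {1} := by
    ext g
    constructor
    · intro hg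
      have hsq : g ^ 2 = 1 := by rw [sq, mul_eq_one_iff_inv_eq]; exact hg
      exact (powCoprime (n := 2) (by simpa using hG)).injective (by simpa using hsq)
    · rintro rfl
      exact inv_one
  obtain ⟨n, hn⟩ := hG
  have hcard : Fintype.card (Function.fixedPoints (Equiv.inv G)) = 1 := by
    rw [Fintype.card_eq_nat_card, fixed_eq, Nat.card_unique]
  have hsq : Equiv.inv G ^ 2 = 1 := by ext g; simp [sq]
  rw [sign_of_pow_two_eq_one hsq, hcard]
  congr 1
  omega

variable {I : Type*} [Fintype I] [DecidableEq I]

theorem extendDomain_zpowersEquivSupport_mulLeft {c : Perm I} (hc : c.IsCycle) :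
    (Equiv.mulLeft (⟨c, Subgroup.mem_zpowers c⟩ : Subgroup.zpowers c)).extendDomain
      hc.zpowersEquivSupport = c := by
  ext1 i
  by_cases hi : i ∈ c.support
  · obtain ⟨g, hg⟩ := hc.zpowersEquivSupport.surjective ⟨i, hi⟩
    obtain rfl : (hc.zpowersEquivSupport g : I) = i := congrArg Subtype.val hg
    rw [extendDomain_apply_image]
    rfl
  · rw [extendDomain_apply_not_subtype _ _ hi, notMem_support.1 hi]

theorem exists_reflection_of_isCycle {c : Perm I} (hc : c.IsCycle) (hodd : Odd c.support.card) :
    ∃ ρ : Perm I, ρ * c = c⁻¹ * ρ ∧ ρ.support ⊆ c.support ∧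
      sign ρ = (-1) ^ (c.support.card / 2) := by
  have hcard : Fintype.card (Subgroup.zpowers c) = c.support.card := by
    rw [Fintype.card_zpowers, hc.orderOf]
  refine ⟨(Equiv.inv (Subgroup.zpowers c)).extendDomain hc.zpowersEquivSupport, ?_,
    fun i hi => by_contra fun h => mem_support.1 hi (extendDomain_apply_not_subtype _ _ h), ?_⟩
  · set ρ := (Equiv.inv (Subgroup.zpowers c)).extendDomain hc.zpowersEquivSupport
    rw [← extendDomain_zpowersEquivSupport_mulLeft hc, extendDomain_inv, extendDomain_mul,
      extendDomain_mul]
    congr 1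
    ext1 g
    simp [mul_comm']
  · rw [sign_extendDomain, sign_inv_of_odd_card (hcard ▸ hodd), hcard]

end Reflections

section DistinctCycleLengths

open Equiv Equiv.Perm

variable {I : Type*}

theorem apply_eq_of_sameCycle [Finite I] {α : Type*} {σ : Perm I} {f : I → α}
    (hf : ∀ i, f (σ i) = f i) {i j : I} (hij : σ.SameCycle i j) : f i = f j := by
  obtain ⟨n, rfl⟩ := hij.exists_nat_pow_eq
  induction n with
  | zero => rfl
  | succ n ih => rw [ih ⟨n, by simp⟩, pow_succ', Perm.mul_apply, hf]

theorem signedPerm_one_mem_cosetStabilizer [DecidableEq I] {σ : Perm I} {i : I} (hi : σ i = i) :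
    signedPerm 1 (fun j => decide (j ∈ ({i} : Finset I))) ∈ cosetStabilizer σ := by
  refine signedPerm_mem_cosetStabilizer_iff.2 fun j => ?_
  have hj : σ j = i ↔ j = i :=
    ⟨fun h => σ.injective (h.trans hi.symm), fun h => h ▸ hi⟩
  by_cases h : j = i
  · simp [h, hi, ← Perm.eq_inv_iff_eq.2 hi]
  · simp [h, hj]

theorem signedPerm_false_mem_cosetStabilizer_iff {σ τ : Perm I} :
    signedPerm τ (fun _ => false) ∈ cosetStabilizer σ ↔ τ ∈ Subgroup.centralizer {σ} := by
  simp [signedPerm_mem_cosetStabilizer_iff, Subgroup.mem_centralizer_singleton_iff, Equiv.ext_iff]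

variable [Fintype I] [DecidableEq I]

theorem blockSign_signedPerm_false (τ : Perm I) :
    blockSign I (signedPerm τ fun _ => false) = sign τ := by
  simp [blockSign_signedPerm]

theorem blockSign_signedPerm_mem (τ : Perm I) (S : Finset I) :
    blockSign I (signedPerm τ fun i => decide (i ∈ S)) = sign τ * (-1) ^ S.card := by
  simp [blockSign_signedPerm, Finset.prod_ite_mem]

theorem exists_signedPerm_support_mem_cosetStabilizer {σ c : Perm I}
    (hc : c ∈ σ.cycleFactorsFinset) (hodd : Odd c.support.card) :
    ∃ ρ : Perm I, ρ.support ⊆ c.support ∧ sign ρ = (-1) ^ (c.support.card / 2) ∧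
      signedPerm ρ (fun i => decide (i ∈ c.support)) ∈ cosetStabilizer σ := by
  obtain ⟨hcycle, hcσ⟩ := mem_cycleFactorsFinset_iff.1 hc
  obtain ⟨ρ, hρc, hρ, hsign⟩ := exists_reflection_of_isCycle hcycle hodd
  refine ⟨ρ, hρ, hsign, signedPerm_mem_cosetStabilizer_iff.2 fun i => ?_⟩
  have hσi := mem_cycleFactorsFinset_support hc i
  refine ⟨by simp only [hσi], ?_⟩
  have fixed {j : I} (hj : j ∉ c.support) : ρ j = j := notMem_support.1 fun h => hj (hρ h)
  by_cases hi : i ∈ c.support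
  · have hρi : c (ρ (σ i)) = ρ i := by
      rw [← hcσ i hi, ← Perm.mul_apply, ← Perm.mul_apply, mul_assoc, hρc, mul_inv_cancel_left]
    have hmem : ρ (σ i) ∈ c.support := by
      rw [← apply_mem_support, hρi]
      by_contra h
      exact h ((ρ.injective (fixed h)).symm ▸ hi)
    rw [if_pos (by simpa using hi), Perm.eq_inv_iff_eq, ← hcσ _ hmem, hρi]
  · rw [if_neg (by simpa using hi), fixed hi, fixed (hσi.not.2 hi)]

theorem neg_one_pow_half_mul_neg_one_pow_eq_one_iff {m : ℕ} (hm : Odd m) :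
    (-1 : ℤˣ) ^ (m / 2) * (-1) ^ m = 1 ↔ m % 4 = 3 := by
  have h : m % 4 = 3 ↔ Odd (m / 2) := by
    rw [Nat.odd_iff] at hm ⊢
    omega
  rw [hm.neg_one_pow, h, mul_neg_one, neg_eq_iff_eq_neg, neg_one_pow_eq_neg_one_iff_odd (by decide)]

theorem cycleType_of_cosetStabilizer_le_ker {σ : Perm I}
    (hσ : cosetStabilizer σ ≤ (blockSign I).ker) :
    σ.cycleType.Nodup ∧ σ.cycleType.sum = Fintype.card I ∧ ∀ m ∈ σ.cycleType, m % 4 = 3 := by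
  have hcentralizer : Subgroup.centralizer {σ} ≤ alternatingGroup I := fun τ hτ => by
    rw [mem_alternatingGroup, ← blockSign_signedPerm_false]
    exact hσ (signedPerm_false_mem_cosetStabilizer_iff.2 hτ)
  obtain ⟨hodd, -, hcount⟩ := centralizer_le_alternating_iff.1 hcentralizer
  refine ⟨Multiset.nodup_iff_count_le_one.2 hcount, ?_, fun m hm => ?_⟩
  · rw [sum_cycleType, Finset.card_eq_iff_eq_univ, Finset.eq_univ_iff_forall]
    refine fun i => mem_support.2 fun hi => ?_
    have h : blockSign I _ = 1 := hσ (signedPerm_one_mem_cosetStabilizer hi)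
    rw [blockSign_signedPerm_mem] at h
    simp at h
  · obtain ⟨c, hc, rfl⟩ := Multiset.mem_map.1 (cycleType_def σ ▸ hm)
    have hc_odd : Odd c.support.card := hodd _ hm
    obtain ⟨ρ, -, hsign, hmem⟩ := exists_signedPerm_support_mem_cosetStabilizer hc hc_odd
    have h : blockSign I _ = 1 := hσ hmem
    rw [blockSign_signedPerm_mem, hsign] at h
    exact (neg_one_pow_half_mul_neg_one_pow_eq_one_iff hc_odd).1 h

theorem exists_signedPerm_mem_cosetStabilizer_card_lt {σ τ : Perm I} {f : I → Bool}
    (hσ : ∀ m ∈ σ.cycleType, m % 4 = 3) (hmem : signedPerm τ f ∈ cosetStabilizer σ) {i : I}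
    (hi_mem : i ∈ σ.support) (hi : f i = true) :
    ∃ τ' f', signedPerm τ' f' ∈ cosetStabilizer σ ∧
      blockSign I (signedPerm τ' f') = blockSign I (signedPerm τ f) ∧
      Finset.card {j | f' j = true} < Finset.card {j | f j = true} := by
  have hc := cycleOf_mem_cycleFactorsFinset_iff.2 hi_mem
  set S := (σ.cycleOf i).support
  have hmod : S.card % 4 = 3 := hσ _ (cycleType_def σ ▸ Multiset.mem_map_of_mem _ hc)
  have hodd : Odd S.card := Nat.odd_iff.2 (Nat.odd_of_mod_four_eq_three hmod)
  obtain ⟨ρ, hρ, hsign, hρ_mem⟩ := exists_signedPerm_support_mem_cosetStabilizer hc hodd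
  have f_eq_true {j : I} (hj : j ∈ S) : f j = true :=
    (apply_eq_of_sameCycle (fun j => (signedPerm_mem_cosetStabilizer_iff.1 hmem j).1)
      (mem_support_cycleOf_iff.1 hj).1).symm.trans hi
  have erase_support (j : I) :
      xor (f (ρ j)) (decide (j ∈ S)) = (f j && decide (j ∉ S)) := by
    by_cases hj : j ∈ S
    · have hρj : ρ j ∈ S := by
        by_contra h
        have hfix : ρ (ρ j) = ρ j := notMem_support.1 fun hmem => h (hρ hmem)
        exact h ((ρ.injective hfix).symm ▸ hj)
      simp [f_eq_true hρj, hj]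
    · have hfix : ρ j = j := notMem_support.1 fun hmem => hj (hρ hmem)
      simp [hfix, hj]
  refine ⟨τ * ρ, fun j => f j && decide (j ∉ S), ?_, ?_, Finset.card_lt_card ⟨fun j => ?_, ?_⟩⟩
  · simpa only [← erase_support, ← signedPerm_mul] using mul_mem hmem hρ_mem
  · simp only [← erase_support, ← signedPerm_mul, map_mul, blockSign_signedPerm_mem, hsign]
    rw [(neg_one_pow_half_mul_neg_one_pow_eq_one_iff hodd).2 hmod, mul_one]
  · simp +contextual
  · have hiS : i ∈ S := mem_support_cycleOf_iff.2 ⟨.rfl, hi_mem⟩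
    exact fun h => by simpa [hiS] using h (Finset.mem_filter.2 ⟨Finset.mem_univ i, hi⟩)

theorem cosetStabilizer_le_ker_of_cycleType {σ : Perm I} (hnodup : σ.cycleType.Nodup)
    (hsum : σ.cycleType.sum = Fintype.card I) (hσ : ∀ m ∈ σ.cycleType, m % 4 = 3) :
    cosetStabilizer σ ≤ (blockSign I).ker := by
  have hsupport : σ.support = Finset.univ := by
    rwa [← Finset.card_eq_iff_eq_univ, ← sum_cycleType]
  have hcentralizer : Subgroup.centralizer {σ} ≤ alternatingGroup I :=
    centralizer_le_alternating_iff.2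
      ⟨fun m hm => Nat.odd_iff.2 (Nat.odd_of_mod_four_eq_three (hσ m hm)), by omega,
        Multiset.nodup_iff_count_le_one.1 hnodup⟩
  intro x hx
  obtain ⟨τ, f, rfl⟩ := exists_eq_signedPerm x
  induction hn : Finset.card {j | f j = true} using Nat.strong_induction_on generalizing τ f with
  | h n ih =>
    by_cases hf : ∃ i, f i = true
    · obtain ⟨i, hi⟩ := hf
      obtain ⟨τ', f', hmem, hχ, hlt⟩ :=
        exists_signedPerm_mem_cosetStabilizer_card_lt hσ hx (hsupport ▸ Finset.mem_univ i) hi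
      rw [MonoidHom.mem_ker, ← hχ]
      exact ih _ (hn ▸ hlt) τ' f' hmem rfl
    · obtain rfl : f = fun _ => false := funext fun i => by simpa using mt (⟨i, ·⟩) hf
      rw [MonoidHom.mem_ker, blockSign_signedPerm_false]
      exact hcentralizer (signedPerm_false_mem_cosetStabilizer_iff.1 hx)

theorem exists_cosetStabilizer_le_ker_iff :
    (∃ σ : Perm I, cosetStabilizer σ ≤ (blockSign I).ker) ↔
      ∃ M : Finset ℕ, (∀ m ∈ M, m % 4 = 3) ∧ ∑ m ∈ M, m = Fintype.card I := by
  constructor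
  · rintro ⟨σ, hσ⟩
    obtain ⟨hnodup, hsum, hmod⟩ := cycleType_of_cosetStabilizer_le_ker hσ
    exact ⟨⟨σ.cycleType, hnodup⟩, hmod, (Finset.sum_val _).symm.trans hsum⟩
  · rintro ⟨M, hmod, hsum⟩
    have hsum' : M.val.sum = Fintype.card I := M.sum_val.trans hsum
    obtain ⟨σ, hσ⟩ := (exists_with_cycleType_iff I (m := M.val)).2
      ⟨hsum'.le, fun m hm => by have := hmod m hm; omega⟩
    exact ⟨σ, cosetStabilizer_le_ker_of_cycleType (hσ ▸ M.nodup) (hσ ▸ hsum') (hσ ▸ hmod)⟩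

end DistinctCycleLengths

section PartSizes

theorem exists_strictAnti_of_forall_mod_four {M : Finset ℕ} (hM : M.Nonempty)
    (hmod : ∀ m ∈ M, m % 4 = 3) :
    ∃ (s : ℕ) (b : Fin s → ℕ), 0 < s ∧ StrictAnti b ∧ (∀ i, 0 < b i) ∧
      ∑ m ∈ M, m + s = 4 * ∑ i, b i := by
  set e := M.orderEmbOfFin rfl
  have he (i : Fin M.card) : e i % 4 = 3 := hmod _ (M.orderEmbOfFin_mem rfl i)
  have hdiv (i : Fin M.card) : 4 * ((e i + 1) / 4) = e i + 1 := by
    have hi := he i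
    omega
  have hsum : ∑ i, e (Fin.rev i) = ∑ m ∈ M, m := by
    calc ∑ i, e (Fin.rev i) = ∑ i, e i := Equiv.sum_comp Fin.revPerm fun i => e i
      _ = ∑ m ∈ Finset.univ.map e.toEmbedding, m := (Finset.sum_map _ _ fun m => m).symm
      _ = ∑ m ∈ M, m := by rw [Finset.map_orderEmbOfFin_univ]
  refine ⟨M.card, fun i => (e (Fin.rev i) + 1) / 4, Finset.card_pos.2 hM, fun i j hij => ?_,
    fun i => ?_, ?_⟩
  · have hlt : e (Fin.rev j) < e (Fin.rev i) := e.strictMono (Fin.rev_lt_rev.2 hij)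
    have hi := hdiv (Fin.rev i)
    have hj := hdiv (Fin.rev j)
    dsimp only
    omega
  · have hi := hdiv (Fin.rev i)
    dsimp only
    omega
  · simp only [Finset.mul_sum, hdiv, Finset.sum_add_distrib, hsum]
    simp

theorem exists_finset_of_strictAnti {s : ℕ} {b : Fin s → ℕ} (hb : StrictAnti b)
    (hpos : ∀ i, 0 < b i) :
    ∃ M : Finset ℕ, (∀ m ∈ M, m % 4 = 3) ∧ ∑ m ∈ M, m + s = 4 * ∑ i, b i := by
  have hsub (i : Fin s) : 4 * b i - 1 + 1 = 4 * b i := by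
    have hi := hpos i
    omega
  have hinj : Function.Injective fun i => 4 * b i - 1 := fun i j hij => hb.injective (by
    have hi := hsub i
    have hj := hsub j
    dsimp only at hij
    omega)
  refine ⟨Finset.univ.map ⟨_, hinj⟩, fun m hm => ?_, ?_⟩
  · obtain ⟨i, -, rfl⟩ := Finset.mem_map.1 hm
    have hi := hsub i
    dsimp only [Function.Embedding.coeFn_mk]
    omega
  · calc ∑ m ∈ Finset.univ.map ⟨_, hinj⟩, m + s = ∑ i, (4 * b i - 1 + 1) := by
          simp [Finset.sum_add_distrib]
      _ = 4 * ∑ i, b i := by simp only [hsub, Finset.mul_sum]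

theorem exists_finset_forall_mod_four_iff {k : ℕ} (hk : 0 < k) :
    (∃ M : Finset ℕ, (∀ m ∈ M, m % 4 = 3) ∧ ∑ m ∈ M, m = k) ↔
      ∃ (s : ℕ) (b : Fin s → ℕ), 0 < s ∧ StrictAnti b ∧ (∀ i, 0 < b i) ∧
        k + s = 4 * ∑ i, b i := by
  constructor
  · rintro ⟨M, hmod, rfl⟩
    exact exists_strictAnti_of_forall_mod_four (Finset.nonempty_of_sum_ne_zero hk.ne') hmod
  · rintro ⟨s, b, -, hb, hpos, hks⟩
    obtain ⟨M, hmod, hsum⟩ := exists_finset_of_strictAnti hb hpos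
    exact ⟨M, hmod, by omega⟩

end PartSizes

section Pairs

/-- The numbering of `{0, …, 2k - 1}` in which the points `2i` and `2i + 1` form the block
`{i} × Bool`. -/
def pairEquiv (k : ℕ) : Fin (2 * k) ≃ Fin k × Bool :=
  (finCongr (mul_comm 2 k)).trans
    (finProdFinEquiv.symm.trans ((Equiv.refl (Fin k)).prodCongr finTwoEquiv))

theorem inducedPairPerm_iff {k : ℕ} {g : Equiv.Perm (Fin (2 * k))} {σ : Equiv.Perm (Fin k)} :
    InducedPairPerm g σ ↔ ∀ x, ((pairEquiv k).permCongr g x).1 = σ x.1 := by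
  rw [← (pairEquiv k).forall_congr_right]
  refine forall_congr' fun i => ?_
  rw [Equiv.permCongr_apply, Equiv.symm_apply_apply]
  exact (Fin.ext_iff (a := (pairEquiv k (g i)).1)).symm

theorem eq_map_ker_blockSign {k : ℕ} {H : Subgroup (Equiv.Perm (Fin (2 * k)))}
    (hH : ∀ g, g ∈ H ↔
      ∃ σ : Equiv.Perm (Fin k), InducedPairPerm g σ ∧ Equiv.Perm.sign g = Equiv.Perm.sign σ) :
    H = (blockSign (Fin k)).ker.map
      ((pairEquiv k).symm.permCongrHom.toMonoidHom.comp
        (hyperoctahedralGroup (Fin k)).subtype) := by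
  ext g
  rw [hH, ← Subgroup.map_map, Subgroup.mem_map_equiv, mem_map_ker_blockSign_iff]
  refine exists_congr fun σ => and_congr inducedPairPerm_iff ?_
  rw [← Equiv.Perm.sign_permCongr (pairEquiv k) g]
  rfl

end Pairs

theorem stmt13 (k : ℕ) (hk : 2 ≤ k)
    -- `H = Δ_k`: the permutations `g` mapping pairs to pairs such that
    -- `sgn g = sgn ḡ`, where `ḡ` is the induced permutation of the `k` pairs
    (H : Subgroup (Equiv.Perm (Fin (2 * k))))
    (hH : ∀ g : Equiv.Perm (Fin (2 * k)), g ∈ H ↔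
      ∃ σ : Equiv.Perm (Fin k), InducedPairPerm g σ ∧
        Equiv.Perm.sign g = Equiv.Perm.sign σ) :
    IsMultFree H ↔
      ¬ ∃ (s : ℕ) (b : Fin s → ℕ), 0 < s ∧ StrictAnti b ∧ (∀ i, 0 < b i) ∧
        k + s = 4 * (∑ i, b i) := by
  have : Nonempty (Fin k) := ⟨⟨0, by omega⟩⟩
  rw [eq_map_ker_blockSign hH, isMultFree_map_ker_blockSign_iff, exists_cosetStabilizer_le_ker_iff,
    Fintype.card_fin, exists_finset_forall_mod_four_iff (by omega)]
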